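/- Let (M, g) be a space-time (a connected four-dimensional oriented Lorentzian manifold), let M' be a closed oriented spacelike hypersurface in M bounding a compact four-dimensional oriented submanifold N ⊂ M (∂N = M'), and let ξ be a unit timelike smooth vector field on N which along M' equals the outward unit normal 𝒩 of M'. Then it is impossible that simultaneously: (1) L_ξ(div ξ) ≥ 0 at all points of N with L_ξ(div ξ) > 0 at some point of N, and (2) div ξ = 0 at all points of M'. -/

import Mathlib

open Manifold MeasureTheory

noncomputable section

/-- The Lie derivative of a real-valued function `f` along a vector field `ξ`:
`(L_ξ f)(x) = df_x(ξ x)`. -/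
def lieDerivFun {n : ℕ} {M : Type*} [TopologicalSpace M]
    [ChartedSpace (EuclideanSpace ℝ (Fin n)) M]
    (ξ : (x : M) → TangentSpace (𝓡 n) x) (f : M → ℝ) (x : M) : ℝ :=
  mfderiv (𝓡 n) 𝓘(ℝ) f x (ξ x)

/-- A smooth vector field on a manifold, i.e. a smooth section of the tangent bundle. -/
def SmoothVectorField {n : ℕ} {M : Type*} [TopologicalSpace M]
    [ChartedSpace (EuclideanSpace ℝ (Fin n)) M] [IsManifold (𝓡 n) (⊤ : ℕ∞) M]
    (ξ : (x : M) → TangentSpace (𝓡 n) x) : Prop :=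
  ContMDiff (𝓡 n) (𝓡 n).tangent (⊤ : ℕ∞) (fun x => (⟨x, ξ x⟩ : TangentBundle (𝓡 n) M))

/-- `IsLieDerivCoeffOf μ ξ h c` encodes, distributionally with respect to the positive
measure `μ` induced by the volume form `ω`, the identity `L_ξ (h·ω) = c·ω` for the Lie
derivative along `ξ`: by integration by parts this holds iff
`∫ ((L_ξ f)·h + f·c) dμ = 0` for every compactly supported smooth test function `f`. -/
def IsLieDerivCoeffOf {n : ℕ} {M : Type*} [TopologicalSpace M]
    [ChartedSpace (EuclideanSpace ℝ (Fin n)) M] [IsManifold (𝓡 n) (⊤ : ℕ∞) M]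
    [MeasurableSpace M] (μ : Measure M)
    (ξ : (x : M) → TangentSpace (𝓡 n) x) (h c : M → ℝ) : Prop :=
  ∀ f : M → ℝ, ContMDiff (𝓡 n) 𝓘(ℝ) (⊤ : ℕ∞) f → HasCompactSupport f →
    ∫ x, (lieDerivFun ξ f x * h x + f x * c x) ∂μ = 0

/-- `IsDivergenceOf μ ξ d` says that `d` is the divergence of `ξ` with respect to the
volume form inducing the measure `μ`, i.e. the unique smooth function with `L_ξ ω = d·ω`. -/
def IsDivergenceOf {n : ℕ} {M : Type*} [TopologicalSpace M]
    [ChartedSpace (EuclideanSpace ℝ (Fin n)) M] [IsManifold (𝓡 n) (⊤ : ℕ∞) M]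
    [MeasurableSpace M] (μ : Measure M)
    (ξ : (x : M) → TangentSpace (𝓡 n) x) (d : M → ℝ) : Prop :=
  ContMDiff (𝓡 n) 𝓘(ℝ) (⊤ : ℕ∞) d ∧ IsLieDerivCoeffOf μ ξ (fun _ => (1 : ℝ)) d

/-- A Lorentzian metric: a smooth symmetric field of bilinear forms on the tangent
spaces, of signature `(-,+,…,+)` (witnessed by a pseudo-orthonormal basis at each point). -/
def IsLorentzMetric {n : ℕ} {M : Type*} [TopologicalSpace M]
    [ChartedSpace (EuclideanSpace ℝ (Fin n)) M] [IsManifold (𝓡 n) (⊤ : ℕ∞) M]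
    (g : (x : M) → TangentSpace (𝓡 n) x → TangentSpace (𝓡 n) x → ℝ) : Prop :=
  (∀ x w, IsLinearMap ℝ (fun v => g x v w)) ∧
  (∀ x v, IsLinearMap ℝ (fun w => g x v w)) ∧
  (∀ x v w, g x v w = g x w v) ∧
  (∀ X Y : (x : M) → TangentSpace (𝓡 n) x, SmoothVectorField X → SmoothVectorField Y →
    ContMDiff (𝓡 n) 𝓘(ℝ) (⊤ : ℕ∞) (fun x => g x (X x) (Y x))) ∧
  (∀ x : M, ∃ b : Module.Basis (Fin n) ℝ (TangentSpace (𝓡 n) x),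
    ∀ i j, g x (b i) (b j) = if i = j then (if (i : ℕ) = 0 then (-1:ℝ) else 1) else 0)

/-!
If `L_ξ (div ξ) ≥ 0` on `N` and `div ξ = 0` on `M'`, the divergence theorem for `(div ξ) ξ` says
that the nonnegative function `L_ξ (div ξ) + (div ξ)²` has zero integral over `N`, so both summands
vanish almost everywhere on `N`. When `M'` is nonempty this contradicts `∫_N div ξ = Vol(M') > 0`.
When `M'` is empty, `N` has no frontier and is all of the connected space `M`; then `L_ξ (div ξ)`,
being continuous, vanishes identically, although it is positive at some point.
-/

theorem continuous_lieDerivFun {n : ℕ} {M : Type*} [TopologicalSpace M]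
    [ChartedSpace (EuclideanSpace ℝ (Fin n)) M] [IsManifold (𝓡 n) 1 M]
    {ξ : (x : M) → TangentSpace (𝓡 n) x}
    (hξ : Continuous fun x => (⟨x, ξ x⟩ : TangentBundle (𝓡 n) M))
    {f : M → ℝ} (hf : ContMDiff (𝓡 n) 𝓘(ℝ) 1 f) :
    Continuous (lieDerivFun ξ f) := by
  have h_tangentMap : Continuous fun x => tangentMap (𝓡 n) 𝓘(ℝ) f ⟨x, ξ x⟩ :=
    (hf.continuous_tangentMap le_rfl).comp hξ
  exact continuous_snd.comp
    ((tangentBundleModelSpaceHomeomorph 𝓘(ℝ)).continuous.comp h_tangentMap)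

theorem ae_eq_zero_of_integral_add_sq_eq_zero {α : Type*} [MeasurableSpace α] {μ : Measure α}
    {f h : α → ℝ} (hf : 0 ≤ᵐ[μ] f) (hint : Integrable (fun x => f x + h x ^ 2) μ)
    (hzero : ∫ x, (f x + h x ^ 2) ∂μ = 0) :
    f =ᵐ[μ] 0 ∧ h =ᵐ[μ] 0 := by
  have hnonneg : 0 ≤ᵐ[μ] fun x => f x + h x ^ 2 :=
    hf.mono fun x hx => add_nonneg hx (sq_nonneg (h x))
  have hsum : (fun x => f x + h x ^ 2) =ᵐ[μ] 0 :=
    (integral_eq_zero_iff_of_nonneg_ae hnonneg hint).1 hzero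
  have hboth : ∀ᵐ x ∂μ, f x = 0 ∧ h x ^ 2 = 0 := by
    filter_upwards [hf, hsum] with x hfx hx
    exact (add_eq_zero_iff_of_nonneg hfx (sq_nonneg (h x))).1 hx
  exact ⟨hboth.mono fun _ hx => hx.1, hboth.mono fun _ hx => sq_eq_zero_iff.1 hx.2⟩

theorem stmt17_general {n : ℕ}
    {M : Type*} [TopologicalSpace M] [T2Space M] [PreconnectedSpace M]
    [ChartedSpace (EuclideanSpace ℝ (Fin n)) M] [IsManifold (𝓡 n) (⊤ : ℕ∞) M]
    [MeasurableSpace M] [OpensMeasurableSpace M]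
    (μ : Measure M) [Measure.IsOpenPosMeasure μ] [IsFiniteMeasureOnCompacts μ]
    {M' : Type*} [TopologicalSpace M'] [MeasurableSpace M']
    (ι : M' → M) (N : Set M) (hN : IsCompact N) (hbd : frontier N = Set.range ι)
    (μ' : Measure M') [Measure.IsOpenPosMeasure μ'] [IsFiniteMeasure μ']
    (ξ : (x : M) → TangentSpace (𝓡 n) x) (hξ : SmoothVectorField ξ)
    (d : M → ℝ) (hd : IsDivergenceOf μ ξ d)
    (hdivthm : ∫ y in N, (lieDerivFun ξ d y + d y ^ 2) ∂μ = ∫ x, d (ι x) ∂μ')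
    (hvol : ∫ y in N, d y ∂μ = (μ' Set.univ).toReal) :
    ¬ ((∀ y ∈ N, 0 ≤ lieDerivFun ξ d y) ∧ (∃ y ∈ N, 0 < lieDerivFun ξ d y) ∧
        (∀ x : M', d (ι x) = 0)) := by
  rintro ⟨hL_nonneg, ⟨y₀, hy₀, hL_pos⟩, hd_boundary⟩
  have hL_cont : Continuous (lieDerivFun ξ d) :=
    continuous_lieDerivFun hξ.continuous (hd.1.of_le (by simp))
  have hint : IntegrableOn (fun y => lieDerivFun ξ d y + d y ^ 2) N μ :=
    (hL_cont.add (hd.1.continuous.pow 2)).continuousOn.integrableOn_compact hN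
  have hzero : ∫ y in N, (lieDerivFun ξ d y + d y ^ 2) ∂μ = 0 := by
    simp only [hdivthm, hd_boundary, integral_zero]
  obtain ⟨hL_ae, hd_ae⟩ := ae_eq_zero_of_integral_add_sq_eq_zero
    (ae_restrict_of_forall_mem hN.measurableSet hL_nonneg) hint hzero
  rcases isEmpty_or_nonempty M' with hM' | hM'
  · have hN_univ : N = Set.univ :=
      (frontier_eq_empty_iff.1 (hbd.trans (Set.range_eq_empty ι))).resolve_left
        (Set.nonempty_of_mem hy₀).ne_empty
    rw [hN_univ, Measure.restrict_univ, hL_cont.ae_eq_iff_eq μ continuous_zero] at hL_ae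
    exact hL_pos.ne' (congrFun hL_ae y₀)
  · have hvol_pos : 0 < (μ' Set.univ).toReal := measureReal_univ_pos
    exact hvol_pos.ne' (hvol.symm.trans (integral_eq_zero_of_ae hd_ae))

/-- Let `(M, g)` be a space-time, `M'` a closed oriented spacelike
hypersurface bounding a compact four-dimensional oriented submanifold `N ⊂ M`
(`∂N = M'`), and `ξ` a unit timelike smooth vector field on `N` equal along `M'` to the
outward unit normal `𝒩` of `M'`. Then it is impossible that simultaneously:
(1) `L_ξ(div ξ) ≥ 0` at all points of `N` with `L_ξ(div ξ) > 0` at some point of `N`, and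
(2) `div ξ = 0` at all points of `M'`. -/
theorem stmt17
    {M : Type*} [TopologicalSpace M] [T2Space M] [ConnectedSpace M]
    [ChartedSpace (EuclideanSpace ℝ (Fin 4)) M] [IsManifold (𝓡 4) (⊤ : ℕ∞) M]
    [MeasurableSpace M] [BorelSpace M]
    (g : (x : M) → TangentSpace (𝓡 4) x → TangentSpace (𝓡 4) x → ℝ)
    (hg : IsLorentzMetric g)
    -- the canonical Lorentzian volume measure of the space-time `(M, g)`
    (μ : Measure M) [Measure.IsOpenPosMeasure μ] [IsFiniteMeasureOnCompacts μ]
    -- `M'`: a spacelike hypersurface of `M`, realized by an embedding `ι : M' → M`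
    {M' : Type*} [TopologicalSpace M'] [T2Space M']
    [ChartedSpace (EuclideanSpace ℝ (Fin (3))) M'] [IsManifold (𝓡 (3)) (⊤ : ℕ∞) M']
    [MeasurableSpace M'] [BorelSpace M']
    (ι : M' → M) (hι : ContMDiff (𝓡 (3)) (𝓡 4) (⊤ : ℕ∞) ι)
    (hemb : Topology.IsEmbedding ι)
    (himm : ∀ x : M', Function.Injective (mfderiv (𝓡 (3)) (𝓡 4) ι x))
    -- `M'` is spacelike: the induced metric is positive definite
    (hspace : ∀ (x : M') (v : TangentSpace (𝓡 (3)) x), v ≠ 0 →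
      0 < g (ι x) (mfderiv (𝓡 (3)) (𝓡 4) ι x v) (mfderiv (𝓡 (3)) (𝓡 4) ι x v))
    -- `M'` is closed and bounds the compact four-dimensional submanifold `N`
    [CompactSpace M']
    (N : Set M) (hN : IsCompact N) (hbd : frontier N = Set.range ι)
    -- the induced volume measure on `M'` (oriented by the outward normal `𝒩`)
    (μ' : Measure M') [Measure.IsOpenPosMeasure μ'] [IsFiniteMeasureOnCompacts μ']
    -- `ξ`: a smooth vector field, unit timelike on `N`
    (ξ : (x : M) → TangentSpace (𝓡 4) x) (hξ : SmoothVectorField ξ)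
    (htime : ∀ y ∈ N, g y (ξ y) (ξ y) = -1)
    -- `𝒩`: the outward unit (imaginary) normal of `M'`, and `ξ = 𝒩` along `M'`
    (nrm : (x : M') → TangentSpace (𝓡 4) (ι x))
    (hnrmunit : ∀ x : M', g (ι x) (nrm x) (nrm x) = -1)
    (hnrmorth : ∀ (x : M') (v : TangentSpace (𝓡 3) x),
      g (ι x) (nrm x) (mfderiv (𝓡 3) (𝓡 4) ι x v) = 0)
    (hξnrm : ∀ x : M', ξ (ι x) = nrm x)
    -- `d = div ξ`
    (d : M → ℝ) (hd : IsDivergenceOf μ ξ d)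
    -- the divergence theorem on `N` applied to `(div ξ)·ξ` and to `ξ` (with `ξ` the
    -- outward normal along `M' = ∂N`)
    (hdivthm : ∫ y in N, (lieDerivFun ξ d y + d y ^ 2) ∂μ = ∫ x, d (ι x) ∂μ')
    (hvol : ∫ y in N, d y ∂μ = (μ' Set.univ).toReal) :
    ¬ ((∀ y ∈ N, 0 ≤ lieDerivFun ξ d y) ∧ (∃ y ∈ N, 0 < lieDerivFun ξ d y) ∧
        (∀ x : M', d (ι x) = 0)) :=
  stmt17_general μ ι N hN hbd μ' ξ hξ d hd hdivthm hvol
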